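/- Let $p$ be a prime, $\mathcal{M} \subseteq \mathbb{F}_p^*$ with $|\mathcal{M}| = M$, and $\mathcal{I} = \{1, \ldots, N\} \pmod p$ with $p^{2/3} \le N < p$. Then $|\mathcal{I} \cdot \mathcal{M}| \gg \min\{p, \; N M p^{-o(1)}\}$, i.e., for every $\varepsilon > 0$ there is $c(\varepsilon) > 0$ with $|\mathcal{I}\cdot\mathcal{M}| \ge c(\varepsilon)\min\{p, NMp^{-\varepsilon}\}$. -/

import Mathlib

open Finset

lemma div_bound (ε : ℝ) (hε : 0 < ε) : ∃ C : ℝ, 1 ≤ C ∧ ∀ n : ℕ, n ≠ 0 →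
    (n.divisors.card : ℝ) ≤ C * (n : ℝ) ^ ε := by
  have hl : 0 < Real.log 2 := Real.log_pos (by norm_num)
  set A : ℝ := 1 + 1 / (ε * Real.log 2) with hA
  have hA1 : 1 ≤ A := by
    have : 0 < 1 / (ε * Real.log 2) := by positivity
    linarith
  set B : ℕ := ⌈(2 : ℝ) ^ (1 / ε)⌉₊ with hB
  refine ⟨A ^ B, one_le_pow₀ hA1, fun n hn => ?_⟩
  have key : ∀ q ∈ n.primeFactors, ((n.factorization q + 1 : ℕ) : ℝ) ≤
      (if q < B then A else 1) * ((q : ℝ) ^ (n.factorization q)) ^ ε := by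
    intro q hq
    have hq2 : (2 : ℝ) ≤ q := by exact_mod_cast (Nat.prime_of_mem_primeFactors hq).two_le
    generalize n.factorization q = k
    have e1 : ((q : ℝ) ^ k) ^ ε = ((q : ℝ) ^ ε) ^ k := by
      rw [← Real.rpow_natCast, ← Real.rpow_natCast, ← Real.rpow_mul (by positivity),
        ← Real.rpow_mul (by positivity), mul_comm]
    rw [e1]
    split_ifs with h
    · have h1 : 1 + k * (ε * Real.log 2) ≤ ((q : ℝ) ^ ε) ^ k := by
        calc 1 + k * (ε * Real.log 2) ≤ Real.exp (k * (ε * Real.log 2)) := by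
              have := Real.add_one_le_exp (k * (ε * Real.log 2)); linarith
          _ = ((2 : ℝ) ^ ε) ^ k := by
              rw [Real.exp_nat_mul, Real.rpow_def_of_pos (by norm_num), mul_comm ε]
          _ ≤ _ := by gcongr
      calc ((k + 1 : ℕ) : ℝ) ≤ A * (1 + k * (ε * Real.log 2)) := by
            have h3 : A * (1 + k * (ε * Real.log 2)) =
              1 + k + (k * (ε * Real.log 2) + 1 / (ε * Real.log 2)) := by
              rw [hA]; field_simp; ring
            rw [h3]; push_cast
            have : 0 ≤ (k * (ε * Real.log 2) + 1 / (ε * Real.log 2)) := by positivity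
            linarith
        _ ≤ _ := by gcongr
    · have h1 : (2 : ℝ) ≤ (q : ℝ) ^ ε := by
        have h2 : (2 : ℝ) ^ (1 / ε) ≤ q := by
          refine (Nat.le_ceil _).trans ?_
          exact_mod_cast not_lt.mp h
        calc (2 : ℝ) = ((2 : ℝ) ^ (1 / ε)) ^ ε := by
              rw [← Real.rpow_mul (by norm_num)]; field_simp; simp
          _ ≤ _ := by gcongr
      have h2 : (k + 1 : ℕ) ≤ 2 ^ k := Nat.lt_two_pow_self
      rw [one_mul]
      calc ((k + 1 : ℕ) : ℝ) ≤ 2 ^ k := by exact_mod_cast h2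
        _ ≤ _ := by gcongr
  rw [Nat.card_divisors hn]
  push_cast
  calc (∏ q ∈ n.primeFactors, ((n.factorization q : ℝ) + 1))
      ≤ ∏ q ∈ n.primeFactors, ((if q < B then A else 1) * ((q : ℝ) ^ (n.factorization q)) ^ ε) := by
        apply Finset.prod_le_prod
        · intros; positivity
        · intro q hq; have := key q hq; push_cast at this; exact this
    _ = (∏ q ∈ n.primeFactors, (if q < B then A else 1)) * (n : ℝ) ^ ε := by
        rw [Finset.prod_mul_distrib, Real.finsetProd_rpow]
        · congr 2
          have := Nat.prod_factorization_pow_eq_self hn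
          conv_rhs => rw [← this]
          simp [Finsupp.prod]
        · intros; positivity
    _ ≤ A ^ B * (n : ℝ) ^ ε := by
        gcongr
        rw [← Finset.prod_filter, Finset.prod_const]
        apply pow_le_pow_right₀ hA1
        calc _ ≤ (Finset.range B).card := by
              apply Finset.card_le_card
              intro q; simp
          _ = B := by simp

lemma cs_card {α β : Type*} [DecidableEq α] [DecidableEq β] (s : Finset α) (f : α → β) (t : Finset β)
    (h : ∀ x ∈ s, f x ∈ t) :
    s.card ^ 2 ≤ t.card * ((s ×ˢ s).filter (fun q => f q.1 = f q.2)).card := by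
  have h1 : s.card = ∑ b ∈ t, (s.filter (fun a => f a = b)).card := card_eq_sum_card_fiberwise h
  have h2 : ((s ×ˢ s).filter (fun q => f q.1 = f q.2)).card
      = ∑ b ∈ t, (s.filter (fun a => f a = b)).card ^ 2 := by
    rw [card_eq_sum_card_fiberwise (f := fun q => f q.1) (t := t)]
    · refine sum_congr rfl fun b _ => ?_
      rw [sq, ← card_product]
      congr 1
      ext ⟨x, y⟩
      simp only [mem_filter, mem_product]
      grind
    · intro q hq
      simp only [coe_filter, mem_product, Set.mem_ofPred_eq] at hq
      exact h _ hq.1.1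
  rw [h2, h1]
  exact sq_sum_le_card_mul_sum_sq

/-- nonzero integers of absolute value at most `L` -/
noncomputable def SS (L : ℕ) : Finset ℤ := (Finset.Icc (-(L : ℤ)) L).erase 0

lemma mem_SS {L : ℕ} {a : ℤ} : a ∈ SS L ↔ a ≠ 0 ∧ a.natAbs ≤ L := by
  simp only [SS, mem_erase, mem_Icc]; omega

/-- lattice points -/
noncomputable def CC (p : ℕ) (L : ℕ) (m n : ZMod p) : Finset (ℤ × ℤ) :=
  (SS L ×ˢ SS L).filter (fun q => (q.1 : ZMod p) * m = (q.2 : ZMod p) * n)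

lemma mem_CC {p L : ℕ} {m n : ZMod p} {a b : ℤ} : (a, b) ∈ CC p L m n ↔
    (a ≠ 0 ∧ a.natAbs ≤ L) ∧ (b ≠ 0 ∧ b.natAbs ≤ L) ∧ (a : ZMod p) * m = (b : ZMod p) * n := by
  simp only [CC, mem_filter, mem_product, mem_SS, and_assoc]

lemma CC_swap (p L : ℕ) (m n : ZMod p) : (CC p L m n).card = (CC p L n m).card := by
  apply Finset.card_bij (fun q _ => q.swap)
  · rintro ⟨a, b⟩ h
    rw [Prod.swap, mem_CC] at *
    exact ⟨h.2.1, h.1, h.2.2.symm⟩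
  · rintro ⟨a, b⟩ _ ⟨c, d⟩ _ h; simpa using Prod.swap_injective h
  · rintro ⟨a, b⟩ h
    refine ⟨(b, a), ?_, rfl⟩
    rw [mem_CC] at *
    exact ⟨h.2.1, h.1, h.2.2.symm⟩

lemma cast_ne {p : ℕ} {L : ℕ} (hL : L < p) {a : ℤ} (h0 : a ≠ 0) (ha : a.natAbs ≤ L) :
    (a : ZMod p) ≠ 0 := by
  intro h
  rw [ZMod.intCast_zmod_eq_zero_iff_dvd] at h
  have := Int.natAbs_dvd_natAbs.mpr h
  simp only [Int.natAbs_natCast] at this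
  have := Nat.le_of_dvd (by omega) this
  omega

lemma lat1 {p : ℕ} [Fact p.Prime] {L : ℕ} (m n : ZMod p) (hm : m ≠ 0) {a0 b0 : ℤ}
    (h0 : (a0, b0) ∈ CC p L m n) (hco : IsCoprime a0 b0) (hab : a0.natAbs ≤ b0.natAbs) :
    ((CC p L m n).card : ℝ) ≤ 16 * (L : ℝ) ^ 2 / p + 4 * (L : ℝ) / (b0.natAbs : ℝ) := by
  have hp : 0 < p := (Fact.out : p.Prime).pos
  rw [mem_CC] at h0
  obtain ⟨⟨ha0, haL⟩, ⟨hb0, hbL⟩, h0⟩ := h0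
  set l := b0.natAbs with hl
  have hl0 : 0 < l := by omega
  set T : ℕ := 2 * L * l / p with hT
  set Q : ℕ := L / l with hQ
  have hdvd : ∀ a b : ℤ, (a, b) ∈ CC p L m n → (p : ℤ) ∣ a * b0 - b * a0 := by
    intro a b h
    rw [mem_CC] at h
    rw [← ZMod.intCast_zmod_eq_zero_iff_dvd]
    push_cast
    have h3 := h.2.2
    have hn : ((a : ZMod p) * b0 - b * a0) * m = 0 ∨ n = 0 := by
      left
      linear_combination (b0 : ZMod p) * h3 - (b : ZMod p) * h0
    rcases hn with hn | hn
    · exact (mul_eq_zero.mp hn).resolve_right hm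
    · rw [hn] at h3 h0
      simp only [mul_zero, mul_eq_zero, hm, or_false] at h3 h0
      simp [h3, h0]
  have hcard : (CC p L m n).card ≤ ((Finset.Icc (-(T : ℤ)) T) ×ˢ (Finset.Icc (-(Q : ℤ) - 1) Q)).card := by
    apply Finset.card_le_card_of_injOn (fun q => ((q.1 * b0 - q.2 * a0) / p, q.2 / (l : ℤ)))
    · rintro ⟨a, b⟩ h
      have hd := hdvd a b h
      rw [mem_coe, mem_CC] at h
      obtain ⟨t, ht⟩ := hd
      simp only [coe_product, Set.mem_prod, mem_coe, mem_Icc]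
      rw [ht, Int.mul_ediv_cancel_left _ (by omega)]
      have habs : (p : ℤ) * |t| ≤ 2 * L * l := by
        have : (p : ℤ) * |t| = |a * b0 - b * a0| := by rw [ht, abs_mul]; simp
        rw [this]
        calc |a * b0 - b * a0| ≤ |a * b0| + |b * a0| := abs_sub _ _
          _ = |a| * |b0| + |b| * |a0| := by rw [abs_mul, abs_mul]
          _ ≤ L * l + L * l := by
            simp only [Int.abs_eq_natAbs]
            gcongr <;> omega
          _ = _ := by ring
      have h4 : |t| ≤ T := by
        rw [hT]; push_cast
        rw [Int.le_ediv_iff_mul_le (by omega)]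
        linarith
      have h5 : b / (l : ℤ) ≤ Q := by
        rw [hQ]; push_cast
        exact Int.ediv_le_ediv (by omega) (by omega)
      have h6 : -(Q : ℤ) - 1 ≤ b / (l : ℤ) := by
        rw [Int.le_ediv_iff_mul_le (by omega)]
        have : (L : ℤ) < (Q + 1) * l := by
          rw [hQ]; exact_mod_cast (Nat.div_lt_iff_lt_mul hl0).mp (Nat.lt_succ_self _)
        have hb : -(L : ℤ) ≤ b := by omega
        nlinarith
      exact ⟨abs_le.mp h4, h6, h5⟩
    · rintro ⟨a, b⟩ h ⟨a', b'⟩ h' heq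
      have hd := hdvd a b h
      have hd' := hdvd a' b' h'
      simp only [Prod.mk.injEq] at heq
      obtain ⟨e1, e2⟩ := heq
      have e3 : a * b0 - b * a0 = a' * b0 - b' * a0 := by
        rw [← Int.mul_ediv_cancel' hd, ← Int.mul_ediv_cancel' hd', e1]
      have e4 : b0 ∣ (b - b') * a0 := ⟨a - a', by linarith⟩
      have e5 : b0 ∣ b - b' := hco.symm.dvd_of_dvd_mul_right e4
      have e6 : |b - b'| < l := by
        have r1 := Int.emod_add_mul_ediv b l
        have r2 := Int.emod_add_mul_ediv b' l
        have r3 := Int.emod_nonneg b (b := (l : ℤ)) (by omega)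
        have r4 := Int.emod_nonneg b' (b := (l : ℤ)) (by omega)
        have r5 := Int.emod_lt_of_pos b (b := (l : ℤ)) (by omega)
        have r6 := Int.emod_lt_of_pos b' (b := (l : ℤ)) (by omega)
        rw [e2] at r1
        rw [abs_lt]; constructor <;> linarith
      have e7 : b - b' = 0 := by
        apply Int.eq_zero_of_abs_lt_dvd _ e6
        rw [hl]; exact Int.natAbs_dvd.mpr e5
      have e8 : b = b' := by omega
      subst e8
      have e9 : a = a' := by
        apply mul_right_cancel₀ hb0; linarith
      rw [e9]
  have hc2 : (CC p L m n).card ≤ (2 * T + 1) * (2 * Q + 2) := by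
    refine hcard.trans (le_of_eq ?_)
    rw [card_product, Int.card_Icc, Int.card_Icc]
    congr 1 <;> omega
  have hTr : (T : ℝ) ≤ 2 * L * l / p := by
    rw [hT]; exact_mod_cast Nat.cast_div_le (α := ℝ) (m := 2 * L * l) (n := p)
  have hQr : (Q : ℝ) ≤ L / l := Nat.cast_div_le
  have hp' : (0 : ℝ) < p := by exact_mod_cast hp
  have hl' : (0 : ℝ) < l := by exact_mod_cast hl0
  have h1 : (1 : ℝ) ≤ L / l := by
    rw [one_le_div hl']; exact_mod_cast hbL
  calc ((CC p L m n).card : ℝ) ≤ (2 * T + 1) * (2 * Q + 2) := by exact_mod_cast hc2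
    _ ≤ (2 * (2 * L * l / p) + 1) * (2 * (L / l) + 2 * (L / l)) := by gcongr; linarith
    _ = _ := by field_simp; ring

lemma lat2 {p : ℕ} [Fact p.Prime] {K L : ℕ} (hK : 1 ≤ K) (hKL : K ≤ L) (hL : L < p) (m n : ZMod p) (hm : m ≠ 0)
    (hn : n ≠ 0) : ((CC p L m n).card : ℝ) ≤ 16 * (L : ℝ) ^ 2 / p + 4 * (L : ℝ) / K
      + 8 * (L / K) * ((CC p K m n).card : ℝ) := by
  rcases (CC p L m n).eq_empty_or_nonempty with he | hne
  · rw [he]; simp; positivity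
  obtain ⟨⟨a0, b0⟩, h0, hmin⟩ := exists_min_image _ (fun q : ℤ × ℤ => max q.1.natAbs q.2.natAbs) hne
  have hco : IsCoprime a0 b0 := by
    rw [Int.isCoprime_iff_gcd_eq_one]
    have hd0 : 0 < Int.gcd a0 b0 := by
      rw [mem_CC] at h0
      exact Int.gcd_pos_of_ne_zero_left _ h0.1.1
    obtain ⟨a', ha'⟩ := Int.gcd_dvd_left a0 b0
    obtain ⟨b', hb'⟩ := Int.gcd_dvd_right a0 b0
    set d := Int.gcd a0 b0
    have ea : a0.natAbs = d * a'.natAbs := by rw [ha', Int.natAbs_mul]; simp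
    have eb : b0.natAbs = d * b'.natAbs := by rw [hb', Int.natAbs_mul]; simp
    have h0' := h0
    rw [mem_CC] at h0'
    obtain ⟨⟨ha0, haL⟩, ⟨hb0, hbL⟩, h00⟩ := h0'
    have ha1 : a' ≠ 0 := by rintro rfl; simp_all
    have hb1 : b' ≠ 0 := by rintro rfl; simp_all
    have hap : 0 < a'.natAbs := by omega
    have hbp : 0 < b'.natAbs := by omega
    have hdL : d ≤ L := by nlinarith
    have hdne : ((d : ℤ) : ZMod p) ≠ 0 := cast_ne hL (by omega) (by simpa using hdL)
    have hmem : (a', b') ∈ CC p L m n := by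
      rw [mem_CC]
      refine ⟨⟨ha1, by nlinarith⟩, ⟨hb1, by nlinarith⟩, ?_⟩
      rw [ha', hb'] at h00
      push_cast at h00 hdne
      apply mul_left_cancel₀ hdne
      linear_combination h00
    have := hmin _ hmem
    simp only at this
    by_contra hne1
    have hd2 : 2 ≤ d := by omega
    have i1 : a'.natAbs < a0.natAbs := by nlinarith
    have i2 : b'.natAbs < b0.natAbs := by nlinarith
    omega
  set l := max a0.natAbs b0.natAbs with hl
  have hbound : ((CC p L m n).card : ℝ) ≤ 16 * (L : ℝ) ^ 2 / p + 4 * (L : ℝ) / (l : ℝ) := by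
    rcases le_total a0.natAbs b0.natAbs with h | h
    · rw [hl, max_eq_right h]
      exact lat1 m n hm h0 hco h
    · rw [hl, max_eq_left h, CC_swap]
      have h1 : (b0, a0) ∈ CC p L n m := by
        rw [mem_CC] at *
        exact ⟨h0.2.1, h0.1, h0.2.2.symm⟩
      exact lat1 n m hn h1 hco.symm h
  have hK' : (0 : ℝ) < K := by exact_mod_cast hK
  rw [mem_CC] at h0
  have hl0 : 0 < l := by omega
  have hl' : (0 : ℝ) < l := by exact_mod_cast hl0
  rcases lt_or_ge K l with hc | hc
  · have : 4 * (L : ℝ) / l ≤ 4 * L / K := by gcongr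
    have : 0 ≤ 8 * ((L : ℝ) / K) * ((CC p K m n).card : ℝ) := by positivity
    linarith
  · have hcard : K / l ≤ (CC p K m n).card := by
      have : (Finset.Icc 1 (K / l)).card ≤ (CC p K m n).card := by
        apply Finset.card_le_card_of_injOn (fun t : ℕ => ((t : ℤ) * a0, (t : ℤ) * b0))
        · intro t ht
          rw [mem_coe, mem_Icc] at ht
          have h1 : t * l ≤ K := (Nat.le_div_iff_mul_le hl0).mp ht.2
          have h2 : a0.natAbs ≤ l := le_max_left _ _
          have h3 : b0.natAbs ≤ l := le_max_right _ _
          rw [mem_coe, mem_CC, Int.natAbs_mul, Int.natAbs_mul]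
          simp only [Int.natAbs_natCast]
          have ht0 : (t : ℤ) ≠ 0 := by omega
          refine ⟨⟨mul_ne_zero ht0 h0.1.1, by nlinarith⟩, ⟨mul_ne_zero ht0 h0.2.1.1, by nlinarith⟩, ?_⟩
          push_cast
          linear_combination (t : ZMod p) * h0.2.2
        · intro t _ t' _ h
          simp only [Prod.mk.injEq] at h
          exact_mod_cast mul_right_cancel₀ h0.1.1 h.1
      simpa using this
    have h1 : K < (K / l + 1) * l := (Nat.div_lt_iff_lt_mul hl0).mp (Nat.lt_succ_self _)
    have h2 : 1 ≤ K / l := (Nat.one_le_div_iff hl0).mpr hc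
    have h3 : K ≤ 2 * (K / l) * l := by nlinarith
    have h4 : K ≤ 2 * (CC p K m n).card * l := h3.trans (by gcongr)
    have h5 : (K : ℝ) ≤ 2 * (CC p K m n).card * l := by exact_mod_cast h4
    have h6 : 4 * (L : ℝ) / l ≤ 8 * ((L : ℝ) / K) * ((CC p K m n).card : ℝ) := by
      rw [div_le_iff₀ hl']
      have : 8 * ((L : ℝ) / K) * ((CC p K m n).card : ℝ) * l
         = 4 * L * ((2 * (CC p K m n).card * l) / K) := by field_simp; ring
      rw [this]
      have : 1 ≤ (2 * ((CC p K m n).card : ℝ) * l) / K := by rwa [one_le_div hK']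
      nlinarith [(Nat.cast_nonneg L : (0:ℝ) ≤ L)]
    have : 0 ≤ 4 * (L : ℝ) / K := by positivity
    linarith

/-- energy set -/
noncomputable def EE (p L : ℕ) (M : Finset (ZMod p)) : Finset ((ZMod p × ZMod p) × (ℤ × ℤ)) :=
  ((M ×ˢ M) ×ˢ (SS L ×ˢ SS L)).filter (fun q => (q.2.1 : ZMod p) * q.1.1 = (q.2.2 : ZMod p) * q.1.2)

lemma mem_EE {p L : ℕ} {M : Finset (ZMod p)} {m n : ZMod p} {a b : ℤ} :
    ((m, n), (a, b)) ∈ EE p L M ↔ m ∈ M ∧ n ∈ M ∧ (a ≠ 0 ∧ a.natAbs ≤ L) ∧ (b ≠ 0 ∧ b.natAbs ≤ L) ∧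
      (a : ZMod p) * m = (b : ZMod p) * n := by
  simp only [EE, mem_filter, mem_product, mem_SS, and_assoc]

lemma EE_card (p L : ℕ) (M : Finset (ZMod p)) :
    (EE p L M).card = ∑ q ∈ M ×ˢ M, (CC p L q.1 q.2).card := by
  rw [EE, card_filter, sum_product]
  refine sum_congr rfl fun q _ => ?_
  rw [CC, card_filter]

lemma EE_lat {p : ℕ} [Fact p.Prime] {K L : ℕ} (hK : 1 ≤ K) (hKL : K ≤ L) (hL : L < p)
    (M : Finset (ZMod p)) (hM : ∀ m ∈ M, m ≠ 0) :
    ((EE p L M).card : ℝ) ≤ (M.card : ℝ) ^ 2 * (16 * (L : ℝ) ^ 2 / p + 4 * (L : ℝ) / K)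
      + 8 * (L / K) * ((EE p K M).card : ℝ) := by
  rw [EE_card, EE_card]
  push_cast
  calc (∑ q ∈ M ×ˢ M, ((CC p L q.1 q.2).card : ℝ))
      ≤ ∑ q ∈ M ×ˢ M, ((16 * (L : ℝ) ^ 2 / p + 4 * (L : ℝ) / K)
        + 8 * (L / K) * ((CC p K q.1 q.2).card : ℝ)) := by
        refine sum_le_sum fun q hq => ?_
        rw [mem_product] at hq
        exact lat2 hK hKL hL _ _ (hM _ hq.1) (hM _ hq.2)
    _ = _ := by
        rw [sum_add_distrib, ← mul_sum, sum_const, card_product]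
        simp only [nsmul_eq_mul]; push_cast; ring

/-- signed divisors -/
noncomputable def DV (x : ℤ) : Finset ℤ :=
  (x.natAbs.divisors.image (fun n : ℕ => (n : ℤ))) ∪ (x.natAbs.divisors.image (fun n : ℕ => -(n : ℤ)))

lemma DV_card (x : ℤ) : (DV x).card ≤ 2 * x.natAbs.divisors.card := by
  refine (card_union_le _ _).trans ?_
  have h1 := card_image_le (s := x.natAbs.divisors) (f := (fun n : ℕ => (n : ℤ)))
  have h2 := card_image_le (s := x.natAbs.divisors) (f := (fun n : ℕ => -(n : ℤ)))
  omega

lemma mem_DV {x a : ℤ} (hx : x ≠ 0) (h : a ∣ x) : a ∈ DV x := by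
  have h1 : a.natAbs ∈ x.natAbs.divisors := by
    rw [Nat.mem_divisors]
    exact ⟨Int.natAbs_dvd_natAbs.mpr h, by omega⟩
  rw [DV, mem_union, mem_image, mem_image]
  rcases le_total 0 a with h2 | h2
  · left; exact ⟨_, h1, by omega⟩
  · right; exact ⟨_, h1, by omega⟩

lemma EE_sq {p : ℕ} [Fact p.Prime] {K : ℕ} (hK : K < p) (d : ℕ)
    (hd : ∀ n : ℕ, n ≠ 0 → n ≤ K ^ 2 → n.divisors.card ≤ d)
    (M : Finset (ZMod p)) :
    (EE p K M).card ^ 2 ≤ M.card * ((2 * d) ^ 2 * (EE p (K ^ 2) M).card) := by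
  refine (cs_card (EE p K M) (fun q => q.1.2) M ?_).trans ?_
  · rintro ⟨⟨m, n⟩, ⟨a, b⟩⟩ h
    rw [mem_EE] at h
    exact h.2.1
  gcongr
  apply card_le_mul_card_image_of_maps_to
    (f := fun q => ((q.1.1.1, q.2.1.1), (q.1.2.1 * q.2.2.2, q.2.2.1 * q.1.2.2)))
  · rintro ⟨⟨⟨m1, n1⟩, ⟨a1, b1⟩⟩, ⟨⟨m2, n2⟩, ⟨a2, b2⟩⟩⟩ h
    simp only [mem_filter, mem_product, mem_EE] at h
    obtain ⟨⟨⟨hm1, hn1, ⟨ha1, ha1'⟩, ⟨hb1, hb1'⟩, e1⟩, ⟨hm2, hn2, ⟨ha2, ha2'⟩, ⟨hb2, hb2'⟩, e2⟩⟩, e⟩ := h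
    rw [mem_EE, Int.natAbs_mul, Int.natAbs_mul, sq]
    refine ⟨hm1, hm2, ⟨mul_ne_zero ha1 hb2, Nat.mul_le_mul ha1' hb2'⟩,
      ⟨mul_ne_zero ha2 hb1, Nat.mul_le_mul ha2' hb1'⟩, ?_⟩
    subst e
    push_cast
    linear_combination (b2 : ZMod p) * e1 - (b1 : ZMod p) * e2
  · rintro ⟨⟨m, m'⟩, ⟨x, y⟩⟩ h
    rw [mem_EE] at h
    obtain ⟨_, _, ⟨hx, hx'⟩, ⟨hy, hy'⟩, _⟩ := h
    have hD : (DV x ×ˢ DV y).card ≤ (2 * d) ^ 2 := by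
      rw [card_product, sq]
      apply Nat.mul_le_mul
      · have := hd x.natAbs (by omega) hx'
        have := DV_card x; omega
      · have := hd y.natAbs (by omega) hy'
        have := DV_card y; omega
    refine le_trans ?_ hD
    apply Finset.card_le_card_of_injOn (fun q => (q.1.2.1, q.2.2.1))
    · rintro ⟨⟨⟨m1, n1⟩, ⟨a1, b1⟩⟩, ⟨⟨m2, n2⟩, ⟨a2, b2⟩⟩⟩ h
      simp only [coe_filter, Set.mem_ofPred_eq, Prod.mk.injEq] at h
      obtain ⟨_, _, rfl, rfl⟩ := h
      simp only [coe_product, Set.mem_prod, mem_coe]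
      exact ⟨mem_DV hx (dvd_mul_right _ _), mem_DV hy (dvd_mul_right _ _)⟩
    · rintro ⟨⟨⟨m1, n1⟩, ⟨a1, b1⟩⟩, ⟨⟨m2, n2⟩, ⟨a2, b2⟩⟩⟩ h
        ⟨⟨⟨m1', n1'⟩, ⟨a1', b1'⟩⟩, ⟨⟨m2', n2'⟩, ⟨a2', b2'⟩⟩⟩ h' heq
      simp only [coe_filter, Set.mem_ofPred_eq, Prod.mk.injEq, mem_filter, mem_product, mem_EE] at h h' heq
      obtain ⟨rfl, rfl⟩ := heq
      obtain ⟨⟨⟨⟨_, _, ⟨ha1, _⟩, ⟨hb1, hb1l⟩, e1⟩, ⟨_, _, ⟨ha2, _⟩, ⟨hb2, _⟩, e2⟩⟩, e⟩, ⟨q1, q2⟩, q3, q4⟩ := h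
      obtain ⟨⟨⟨⟨_, _, _, _, e1'⟩, ⟨_, _, _, _, e2'⟩⟩, e'⟩, ⟨q1', q2'⟩, q3', q4'⟩ := h'
      have r1 : b2 = b2' := mul_left_cancel₀ ha1 (q3.trans q3'.symm)
      have r2 : b1 = b1' := mul_left_cancel₀ ha2 (q4.trans q4'.symm)
      have r3 : m1 = m1' := q1.trans q1'.symm
      have r4 : m2 = m2' := q2.trans q2'.symm
      subst r1 r2 r3 r4
      have r5 : n1 = n1' := mul_left_cancel₀ (cast_ne hK hb1 hb1l) (e1.symm.trans e1')
      subst r5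
      subst e
      subst e'
      rfl

lemma quad (e u v : ℝ) (hu : 0 ≤ u) (hv : 0 ≤ v) (h : e ^ 2 ≤ v * (20 * u + 8 * e)) :
    e ≤ 20 * (u + v) := by
  by_contra hc
  push Not at hc
  have h1 : 0 ≤ u * v := mul_nonneg hu hv
  have h2 : 0 < e := by linarith
  nlinarith [mul_nonneg hu h2.le, mul_nonneg hv h2.le, mul_nonneg hv hv, mul_nonneg hu hu]

lemma EE_bound {p N : ℕ} [Fact p.Prime] (hN : p ^ 2 ≤ N ^ 3) (hNp : N < p) (d : ℕ)
    (hd : ∀ n : ℕ, n ≠ 0 → n ≤ p → n.divisors.card ≤ d)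
    (M : Finset (ZMod p)) (hM : ∀ m ∈ M, m ≠ 0) :
    ((EE p N M).card : ℝ) ≤ 344 * ((N : ℝ) * M.card) * ((N : ℝ) * M.card / p + (2 * d) ^ 2) := by
  have hp : 1 < p := (Fact.out : p.Prime).one_lt
  have hN0 : 0 < N := by
    rcases Nat.eq_zero_or_pos N with h | h
    · subst h; simp at hN; omega
    · exact h
  set K := p / N with hKdef
  have hK1 : 1 ≤ K := (Nat.one_le_div_iff hN0).mpr hNp.le
  have hKN : K * N ≤ p := Nat.div_mul_le_self p N
  have hKN2 : p < (K + 1) * N := (Nat.div_lt_iff_lt_mul hN0).mp (Nat.lt_succ_self _)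
  have hK3 : K ^ 3 ≤ p := by
    have h1 : K ^ 3 * N ^ 3 ≤ p ^ 3 := by rw [← mul_pow]; exact Nat.pow_le_pow_left hKN 3
    have h2 : K ^ 3 * p ^ 2 ≤ p * p ^ 2 := by
      calc _ ≤ K ^ 3 * N ^ 3 := by gcongr
        _ ≤ _ := by rw [← pow_succ']; exact h1
    exact Nat.le_of_mul_le_mul_right h2 (by positivity)
  have hK2 : K ^ 2 < p := by
    rcases hK1.lt_or_eq with h | h
    · nlinarith [sq_nonneg K]
    · rw [← h]; simpa using hp
  have hKK : K ≤ K ^ 2 := by nlinarith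
  have hKleN : K ≤ N := by
    by_contra hc
    push Not at hc
    have : N ^ 3 ≤ K ^ 3 := Nat.pow_le_pow_left hc.le 3
    nlinarith
  have s1 := EE_lat hK1 hKleN hNp M hM
  have s2 := EE_lat hK1 hKK hK2 M hM
  have s3 := EE_sq (hKK.trans_lt hK2) d (fun n h0 h => hd n h0 (h.trans hK2.le)) M
  have s3' : ((EE p K M).card : ℝ) ^ 2 ≤ M.card * ((2 * d) ^ 2 * ((EE p (K ^ 2) M).card : ℝ)) := by
    exact_mod_cast s3
  have hpr : (0 : ℝ) < p := by positivity
  have hKr : (0 : ℝ) < K := by exact_mod_cast hK1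
  have hK3r : (K : ℝ) ^ 3 ≤ p := by exact_mod_cast hK3
  have hinv : 1 / (K : ℝ) ≤ 2 * N / p := by
    rw [div_le_div_iff₀ hKr hpr]
    have : p ≤ 2 * N * K := by nlinarith
    rw [one_mul]; exact_mod_cast this
  generalize ((EE p N M).card : ℝ) = EN at *
  generalize ((EE p (K ^ 2) M).card : ℝ) = E2 at *
  have hE1 : (0 : ℝ) ≤ ((EE p K M).card : ℝ) := by positivity
  generalize ((EE p K M).card : ℝ) = E1 at *
  have hm : (0 : ℝ) ≤ (M.card : ℝ) := by positivity
  generalize (M.card : ℝ) = m at *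
  have hNr : (0 : ℝ) ≤ (N : ℝ) := by positivity
  generalize (N : ℝ) = n at *
  set D : ℝ := (2 * (d : ℝ)) ^ 2 with hD
  have hD0 : 0 ≤ D := by positivity
  push_cast at s2
  have s2' : E2 ≤ 20 * K * m ^ 2 + 8 * K * E1 := by
    have h1 : 16 * ((K : ℝ) ^ 2) ^ 2 / p ≤ 16 * K := by
      rw [div_le_iff₀ hpr]; nlinarith
    have h2 : 4 * (K : ℝ) ^ 2 / K = 4 * K := by field_simp
    have h3 : (K : ℝ) ^ 2 / K = K := by field_simp
    rw [h2, h3] at s2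
    nlinarith [mul_le_mul_of_nonneg_left h1 (sq_nonneg m)]
  have hq : E1 / K ≤ 20 * (m ^ 2 / K + D * m) := by
    apply quad
    · positivity
    · positivity
    · have : E1 ^ 2 ≤ m * (D * (20 * K * m ^ 2 + 8 * K * E1)) := s3'.trans (by gcongr)
      rw [div_pow, div_le_iff₀ (by positivity)]
      refine this.trans (le_of_eq ?_)
      field_simp
  have s4 : EN ≤ m ^ 2 * (16 * n ^ 2 / p + 4 * n * (1 / K)) + 8 * n * (20 * (m ^ 2 * (1 / K) + D * m)) := by
    calc EN ≤ _ := s1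
      _ = m ^ 2 * (16 * n ^ 2 / p + 4 * n * (1 / K)) + 8 * n * (E1 / K) := by ring
      _ ≤ m ^ 2 * (16 * n ^ 2 / p + 4 * n * (1 / K)) + 8 * n * (20 * (m ^ 2 / K + D * m)) := by gcongr
      _ = _ := by ring
  calc EN ≤ _ := s4
    _ ≤ m ^ 2 * (16 * n ^ 2 / p + 4 * n * (2 * n / p)) + 8 * n * (20 * (m ^ 2 * (2 * n / p) + D * m)) := by gcongr
    _ = 344 * (n * m) * (n * m / p) + 160 * (n * m) * D := by ring
    _ ≤ _ := by
      have : 0 ≤ (n * m) * D := by positivity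
      nlinarith

theorem stmt_19 :
    ∀ ε : ℝ, 0 < ε → ∃ c : ℝ, 0 < c ∧ ∀ (p N : ℕ), p.Prime →
      (p : ℝ) ^ ((2 : ℝ) / 3) ≤ (N : ℝ) → N < p →
      ∀ (M : Finset (ZMod p)), (∀ m ∈ M, m ≠ 0) →
      ((((Finset.Icc 1 N) ×ˢ M).image
          (fun q : ℕ × ZMod p => (q.1 : ZMod p) * q.2)).card : ℝ)
        ≥ c * min (p : ℝ) ((N : ℝ) * (M.card : ℝ) * (p : ℝ) ^ (-ε)) := by
  intro ε hε
  obtain ⟨C, hC1, hC⟩ := div_bound (ε / 2) (by positivity)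
  refine ⟨1 / (344 * (1 + 4 * C ^ 2)), by positivity, ?_⟩
  intro p N hpp hN hNp M hM
  have : Fact p.Prime := ⟨hpp⟩
  have hp0 : (0 : ℝ) < p := by exact_mod_cast hpp.pos
  have hN3 : p ^ 2 ≤ N ^ 3 := by
    have h1 : ((p : ℝ) ^ ((2 : ℝ) / 3)) ^ 3 ≤ (N : ℝ) ^ 3 := by gcongr
    rw [← Real.rpow_natCast, ← Real.rpow_mul hp0.le] at h1
    norm_num at h1
    exact_mod_cast h1
  set d : ℕ := ⌊C * (p : ℝ) ^ (ε / 2)⌋₊ with hd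
  have hdb : ∀ n : ℕ, n ≠ 0 → n ≤ p → n.divisors.card ≤ d := by
    intro n h0 hn
    apply Nat.le_floor
    refine (hC n h0).trans ?_
    gcongr
  have hdr : (2 * (d : ℝ)) ^ 2 ≤ 4 * C ^ 2 * (p : ℝ) ^ ε := by
    have h1 : (d : ℝ) ≤ C * (p : ℝ) ^ (ε / 2) := Nat.floor_le (by positivity)
    have h2 : ((p : ℝ) ^ (ε / 2)) ^ 2 = (p : ℝ) ^ ε := by
      rw [← Real.rpow_natCast, ← Real.rpow_mul hp0.le]; congr 1; push_cast; ring
    calc (2 * (d : ℝ)) ^ 2 ≤ (2 * (C * (p : ℝ) ^ (ε / 2))) ^ 2 := by gcongr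
      _ = 4 * C ^ 2 * ((p : ℝ) ^ (ε / 2)) ^ 2 := by ring
      _ = _ := by rw [h2]
  have hE := EE_bound hN3 hNp d hdb M hM
  set I := ((Finset.Icc 1 N) ×ˢ M).image (fun q : ℕ × ZMod p => (q.1 : ZMod p) * q.2) with hI
  have hcs := cs_card ((Finset.Icc 1 N) ×ˢ M) (fun q : ℕ × ZMod p => (q.1 : ZMod p) * q.2) I
    (fun x hx => mem_image_of_mem _ hx)
  have hemb : ((((Finset.Icc 1 N) ×ˢ M) ×ˢ ((Finset.Icc 1 N) ×ˢ M)).filter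
      (fun q : (ℕ × ZMod p) × (ℕ × ZMod p) => (q.1.1 : ZMod p) * q.1.2 = (q.2.1 : ZMod p) * q.2.2)).card
      ≤ (EE p N M).card := by
    apply Finset.card_le_card_of_injOn (fun q => ((q.1.2, q.2.2), ((q.1.1 : ℤ), (q.2.1 : ℤ))))
    · rintro ⟨⟨a, m⟩, ⟨b, n⟩⟩ h
      simp only [coe_filter, Set.mem_ofPred_eq, mem_product, mem_Icc] at h
      rw [mem_coe, mem_EE]
      refine ⟨h.1.1.2, h.1.2.2, ⟨by dsimp only; omega, by dsimp only; omega⟩, ⟨by dsimp only; omega, by dsimp only; omega⟩, ?_⟩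
      push_cast
      exact h.2
    · rintro ⟨⟨a, m⟩, ⟨b, n⟩⟩ _ ⟨⟨a', m'⟩, ⟨b', n'⟩⟩ _ h
      simp only [Prod.mk.injEq, Nat.cast_inj] at h ⊢
      tauto
  have hcs2 : (N * M.card) ^ 2 ≤ I.card * (EE p N M).card := by
    refine le_trans ?_ (hcs.trans (Nat.mul_le_mul_left _ hemb))
    simp
  have hcs3 : ((N : ℝ) * M.card) ^ 2 ≤ I.card * ((EE p N M).card : ℝ) := by exact_mod_cast hcs2
  have hI0 : (0 : ℝ) ≤ I.card := by positivity
  have hx0 : 0 ≤ (N : ℝ) * M.card := by positivity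
  generalize ((EE p N M).card : ℝ) = E at *
  generalize (I.card : ℝ) = J at *
  generalize (N : ℝ) * M.card = x at *
  have hP : 0 < (p : ℝ) ^ ε := by positivity
  rw [Real.rpow_neg hp0.le]
  generalize (p : ℝ) ^ ε = P at *
  rcases hx0.eq_or_lt with hx | hx
  · rw [← hx]; simp [hp0.le]; exact hI0
  set μ := min (p : ℝ) (x * P⁻¹) with hμ
  have hμ0 : 0 < μ := lt_min hp0 (by positivity)
  have b1 : x / p ≤ x / μ := by gcongr; exact min_le_left _ _
  have b2 : P ≤ x / μ := by
    rw [le_div_iff₀ hμ0]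
    calc P * μ ≤ P * (x * P⁻¹) := by gcongr; exact min_le_right _ _
      _ = x := by field_simp
  have b3 : x / p + (2 * (d : ℝ)) ^ 2 ≤ (1 + 4 * C ^ 2) * (x / μ) := by
    have : 4 * C ^ 2 * P ≤ 4 * C ^ 2 * (x / μ) := by gcongr
    linarith
  have b4 : x ^ 2 ≤ J * (344 * x * ((1 + 4 * C ^ 2) * (x / μ))) :=
    hcs3.trans (by gcongr; exact hE.trans (by gcongr))
  have b5 : x ^ 2 * μ ≤ x ^ 2 * (J * (344 * (1 + 4 * C ^ 2))) := by
    calc x ^ 2 * μ ≤ (J * (344 * x * ((1 + 4 * C ^ 2) * (x / μ)))) * μ := by gcongr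
      _ = _ := by field_simp
  have b6 := le_of_mul_le_mul_left b5 (by positivity)
  rw [ge_iff_le, one_div, inv_mul_le_iff₀ (by positivity)]
  linarith
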